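/- arXiv:2211.08792 — 3 statements merged into one kernel-verified Lean document; each statement's English description precedes it below -/
import Mathlib

section
/- Consider a 2×2 zero-sum game with payoff matrix entries u11, u12, u21, u22, whose set of Nash equilibria S is a singleton {(p*, q*)}. Then (p*, q*) = (1, 0) if and only if u11 > u12 > u22. Furthermore, in that case the equilibrium payoff is u(p*, q*) = u12. -/
/-- Expected payoff of the 2×2 zero-sum game with payoff matrix entries
`u11, u12, u21, u22`, when Player 1 plays its first action with probability `p`
and Player 2 plays its first action with probability `q`. -/
noncomputable def payoff (u11 u12 u21 u22 p q : ℝ) : ℝ :=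
  u11 * p * q + u12 * p * (1 - q) + u21 * (1 - p) * q + u22 * (1 - p) * (1 - q)

/-- `(p, q)` is a Nash equilibrium of the 2×2 zero-sum game. -/
def IsNE (u11 u12 u21 u22 p q : ℝ) : Prop :=
  p ∈ Set.Icc (0 : ℝ) 1 ∧ q ∈ Set.Icc (0 : ℝ) 1 ∧
    (∀ p' ∈ Set.Icc (0 : ℝ) 1, payoff u11 u12 u21 u22 p' q ≤ payoff u11 u12 u21 u22 p q) ∧
    (∀ q' ∈ Set.Icc (0 : ℝ) 1, payoff u11 u12 u21 u22 p q ≤ payoff u11 u12 u21 u22 p q')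

/-! If `u11 > u12 > u22`, then `(1, 0)` is an equilibrium, so every equilibrium `(p, q)` has payoff
`u12` and neither `(1, q)` nor `(p, 0)` improves on it for the deviating player. The strict
inequalities then force `q = 0` and `p = 1`.

Conversely, if `(1, 0)` is an equilibrium then `u11 ≥ u12 ≥ u22`. If `u11 = u12`, Player 2 is
indifferent against the first row, so `(1, q)` is an equilibrium as soon as Player 1 still prefers
the first row; this holds for small `q > 0` if `u22 < u12`, and for `q = 1` if `u21 ≤ u12`. In the
remaining case `u22 = u12 < u21`, `(0, 0)` is an equilibrium. The case `u12 = u22` is this one with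
the players exchanged. -/

open Filter Set Topology

section

variable {u11 u12 u21 u22 p q p' q' a : ℝ}

lemma payoff_eq_mix_left (u11 u12 u21 u22 p q : ℝ) :
    payoff u11 u12 u21 u22 p q =
      p * payoff u11 u12 u21 u22 1 q + (1 - p) * payoff u11 u12 u21 u22 0 q := by
  unfold payoff
  ring

lemma payoff_one_zero (u11 u12 u21 u22 : ℝ) : payoff u11 u12 u21 u22 1 0 = u12 := by
  simp [payoff]

lemma continuous_payoff_right (u11 u12 u21 u22 p : ℝ) :
    Continuous (payoff u11 u12 u21 u22 p) := by
  unfold payoff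
  fun_prop

-- Exchanging the players negates and transposes the payoffs; reversing the order of both players'
-- actions as well makes `(1, 0)` a fixed point of the symmetry.
lemma payoff_dual (u11 u12 u21 u22 p q : ℝ) :
    payoff (-u22) (-u12) (-u21) (-u11) (1 - q) (1 - p) = -payoff u11 u12 u21 u22 p q := by
  unfold payoff
  ring

namespace IsNE

lemma dual (h : IsNE u11 u12 u21 u22 p q) :
    IsNE (-u22) (-u12) (-u21) (-u11) (1 - q) (1 - p) := by
  obtain ⟨hp, hq, hrow, hcol⟩ := h
  refine ⟨Icc.mem_iff_one_sub_mem.1 hq, Icc.mem_iff_one_sub_mem.1 hp, fun q' hq' ↦ ?_,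
    fun p' hp' ↦ ?_⟩
  · rw [← sub_sub_cancel 1 q', payoff_dual, payoff_dual, neg_le_neg_iff]
    exact hcol _ (Icc.mem_iff_one_sub_mem.1 hq')
  · rw [← sub_sub_cancel 1 p', payoff_dual, payoff_dual, neg_le_neg_iff]
    exact hrow _ (Icc.mem_iff_one_sub_mem.1 hp')

lemma payoff_le_payoff (h : IsNE u11 u12 u21 u22 p q) (h' : IsNE u11 u12 u21 u22 p' q') :
    payoff u11 u12 u21 u22 p q ≤ payoff u11 u12 u21 u22 p' q' :=
  calc
    payoff u11 u12 u21 u22 p q ≤ payoff u11 u12 u21 u22 p q' := h.2.2.2 q' h'.2.1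
    _ ≤ payoff u11 u12 u21 u22 p' q' := h'.2.2.1 p h.1

lemma payoff_eq_payoff (h : IsNE u11 u12 u21 u22 p q) (h' : IsNE u11 u12 u21 u22 p' q') :
    payoff u11 u12 u21 u22 p q = payoff u11 u12 u21 u22 p' q' :=
  (h.payoff_le_payoff h').antisymm (h'.payoff_le_payoff h)

end IsNE

lemma payoff_le_payoff_one_left (hp : p ≤ 1)
    (h : payoff u11 u12 u21 u22 0 q ≤ payoff u11 u12 u21 u22 1 q) :
    payoff u11 u12 u21 u22 p q ≤ payoff u11 u12 u21 u22 1 q := by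
  rw [payoff_eq_mix_left]
  linarith [mul_le_mul_of_nonneg_left h (sub_nonneg.2 hp)]

lemma isNE_one_zero_iff : IsNE u11 u12 u21 u22 1 0 ↔ u12 ≤ u11 ∧ u22 ≤ u12 := by
  constructor
  · rintro ⟨-, -, hrow, hcol⟩
    have hrow₀ := hrow 0 (by simp)
    have hcol₁ := hcol 1 (by simp)
    simp only [payoff] at hrow₀ hcol₁
    constructor <;> linarith
  · rintro ⟨h₁, h₂⟩
    refine ⟨by simp, by simp, fun p' hp' ↦ ?_, fun q' hq' ↦ ?_⟩
    · exact payoff_le_payoff_one_left hp'.2 (by simpa [payoff] using h₂)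
    · simp only [payoff]
      linarith [mul_le_mul_of_nonneg_left h₁ hq'.1]

lemma isNE_one_of_row_const (hq : q ∈ Icc 0 1) (h : payoff a a u21 u22 0 q ≤ a) :
    IsNE a a u21 u22 1 q := by
  have payoff_row (q' : ℝ) : payoff a a u21 u22 1 q' = a := by
    unfold payoff
    ring
  refine ⟨by simp, hq, fun p' hp' ↦ ?_, fun q' _ ↦ ?_⟩
  · exact payoff_le_payoff_one_left hp'.2 (by rwa [payoff_row])
  · rw [payoff_row, payoff_row]

lemma isNE_zero_zero_of_col_const (h : a ≤ u21) : IsNE u11 a u21 a 0 0 := by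
  refine ⟨by simp, by simp, fun p' _ ↦ ?_, fun q' hq' ↦ ?_⟩
  · simp only [payoff]
    linarith
  · simp only [payoff]
    linarith [mul_le_mul_of_nonneg_left h hq'.1]

lemma exists_isNE_ne_of_row_const (u21 : ℝ) (h : u22 ≤ a) :
    ∃ p q, IsNE a a u21 u22 p q ∧ (p, q) ≠ (1, 0) := by
  rcases h.lt_or_eq with hlt | rfl
  · have h₀ : payoff a a u21 u22 0 0 < a := by simpa [payoff] using hlt
    have hnear : ∀ᶠ q in 𝓝[>] 0, payoff a a u21 u22 0 q < a :=
      ((continuous_payoff_right a a u21 u22 0).continuousAt.eventually_lt_const h₀).filter_mono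
        nhdsWithin_le_nhds
    obtain ⟨q, hqa, hq⟩ := (hnear.and (Ioo_mem_nhdsGT one_pos)).exists
    exact ⟨1, q, isNE_one_of_row_const (Ioo_subset_Icc_self hq) hqa.le, by simp [hq.1.ne']⟩
  · rcases le_total u21 u22 with h₁ | h₁
    · exact ⟨1, 1, isNE_one_of_row_const (by simp) (by simpa [payoff] using h₁), by simp⟩
    · exact ⟨0, 0, isNE_zero_zero_of_col_const h₁, by simp⟩

lemma exists_isNE_ne_of_col_const (u21 : ℝ) (h : a ≤ u11) :
    ∃ p q, IsNE u11 a u21 a p q ∧ (p, q) ≠ (1, 0) := by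
  obtain ⟨p, q, hNE, hne⟩ := exists_isNE_ne_of_row_const (-u21) (neg_le_neg h)
  refine ⟨1 - q, 1 - p, by simpa only [neg_neg] using hNE.dual, fun heq ↦ hne ?_⟩
  obtain ⟨hq, hp⟩ := Prod.mk.inj heq
  exact Prod.ext (by linarith) (by linarith)

lemma IsNE.eq_one_zero (h : IsNE u11 u12 u21 u22 p q) (h₁ : u12 < u11) (h₂ : u22 < u12) :
    (p, q) = (1, 0) := by
  have hvalue : payoff u11 u12 u21 u22 p q = u12 :=
    (h.payoff_eq_payoff (isNE_one_zero_iff.2 ⟨h₁.le, h₂.le⟩)).trans (payoff_one_zero ..)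
  obtain ⟨hp, hq, hrow, hcol⟩ := h
  have hrow₁ : q * (u11 - u12) ≤ 0 := by
    have := hrow 1 (by simp)
    rw [hvalue, payoff] at this
    linarith
  have hcol₀ : (1 - p) * (u12 - u22) ≤ 0 := by
    have := hcol 0 (by simp)
    rw [hvalue, payoff] at this
    linarith
  have hq₀ : q ≤ 0 := nonpos_of_mul_nonpos_left hrow₁ (sub_pos.2 h₁)
  have hp₁ : 1 - p ≤ 0 := nonpos_of_mul_nonpos_left hcol₀ (sub_pos.2 h₂)
  exact Prod.ext (hp.2.antisymm (sub_nonpos.1 hp₁)) (hq₀.antisymm hq.1)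

lemma lt_and_lt_of_isNE_unique (h : IsNE u11 u12 u21 u22 1 0)
    (hunique : ∀ p q, IsNE u11 u12 u21 u22 p q → (p, q) = (1, 0)) :
    u12 < u11 ∧ u22 < u12 := by
  obtain ⟨h₁, h₂⟩ := isNE_one_zero_iff.1 h
  constructor
  · refine h₁.lt_of_ne ?_
    rintro rfl
    obtain ⟨p, q, hNE, hne⟩ := exists_isNE_ne_of_row_const u21 h₂
    exact hne (hunique p q hNE)
  · refine h₂.lt_of_ne ?_
    rintro rfl
    obtain ⟨p, q, hNE, hne⟩ := exists_isNE_ne_of_col_const u21 h₁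
    exact hne (hunique p q hNE)

end

theorem stmt10_general (u11 u12 u21 u22 : ℝ) :
    ({pq : ℝ × ℝ | IsNE u11 u12 u21 u22 pq.1 pq.2} = {(1, 0)} ↔ u11 > u12 ∧ u12 > u22) ∧
    (u11 ≥ u12 ∧ u12 ≥ u22 →
      ∀ p q, IsNE u11 u12 u21 u22 p q → payoff u11 u12 u21 u22 p q = u12) := by
  refine ⟨?_, fun hu p q h ↦ ?_⟩
  · rw [eq_singleton_iff_unique_mem]
    constructor
    · rintro ⟨h, hunique⟩
      exact lt_and_lt_of_isNE_unique h fun p q ↦ hunique (p, q)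
    · rintro ⟨h₁, h₂⟩
      exact ⟨isNE_one_zero_iff.2 ⟨h₁.le, h₂.le⟩, fun _ h ↦ h.eq_one_zero h₁ h₂⟩
  · exact (h.payoff_eq_payoff (isNE_one_zero_iff.2 hu)).trans (payoff_one_zero ..)

theorem stmt10 (u11 u12 u21 u22 p q : ℝ)
    (hS : {pq : ℝ × ℝ | IsNE u11 u12 u21 u22 pq.1 pq.2} = {(p, q)}) :
    ((p, q) = ((1 : ℝ), (0 : ℝ)) ↔ (u11 > u12 ∧ u12 > u22)) ∧
    ((u11 > u12 ∧ u12 > u22) → payoff u11 u12 u21 u22 p q = u12) := by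
  obtain ⟨hiff, hvalue⟩ := stmt10_general u11 u12 u21 u22
  exact ⟨by rw [← hiff, hS, Set.singleton_eq_singleton_iff],
    fun hu ↦ hvalue ⟨hu.1.le, hu.2.le⟩ p q (hS.ge rfl)⟩
end

section
/- Consider a 2×2 zero-sum game with payoff matrix entries u11, u12, u21, u22, whose set of Nash equilibria S is a singleton {(p*, q*)}. Then (p*, q*) = (0, 0) if and only if u21 > u22 > u12. Furthermore, in that case the equilibrium payoff is u(p*, q*) = u22. -/
/-!
Equilibria of a zero-sum game are interchangeable, so if `(0, 0)` and `(p, q)` are equilibria then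
so are `(p, 0)` and `(0, q)`; when `u12 < u22 < u21`, a deviation back to `0` is strictly profitable
unless `p = q = 0`. Conversely, if one of the inequalities `u12 ≤ u22 ≤ u21` is an equality, the
player it concerns can move away from `0` at no cost. If the other inequality is strict, its slack
absorbs a small such move; if both are equalities, the sign of `u11 - u22` decides which player
can move all the way to `1`.
-/

open Filter Set Topology

section

variable {u11 u12 u21 u22 p q p' q' : ℝ}

lemma payoff_swap :
    payoff (-u11) (-u21) (-u12) (-u22) q p = -payoff u11 u12 u21 u22 p q := by
  unfold payoff
  ring

lemma isNE_swap_iff :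
    IsNE (-u11) (-u21) (-u12) (-u22) q p ↔ IsNE u11 u12 u21 u22 p q := by
  simp only [IsNE, payoff_swap, neg_le_neg_iff]
  tauto

lemma isNE_iff_isSaddlePointOn :
    IsNE u11 u12 u21 u22 p q ↔ p ∈ Icc 0 1 ∧ q ∈ Icc 0 1 ∧
      IsSaddlePointOn (Icc 0 1) (Icc 0 1) (fun y x ↦ payoff u11 u12 u21 u22 x y) q p := by
  refine and_congr_right fun hp ↦ and_congr_right fun hq ↦ ⟨?_, fun h ↦ ?_⟩
  · rintro ⟨hmax, hmin⟩ y hy x hx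
    exact (hmax x hx).trans (hmin y hy)
  · exact ⟨fun x hx ↦ h q hq x hx, fun y hy ↦ h y hy p hp⟩

lemma IsNE.interchange (h : IsNE u11 u12 u21 u22 p q) (h' : IsNE u11 u12 u21 u22 p' q') :
    IsNE u11 u12 u21 u22 p q' := by
  obtain ⟨hp, hq, hs⟩ := isNE_iff_isSaddlePointOn.1 h
  obtain ⟨hp', hq', hs'⟩ := isNE_iff_isSaddlePointOn.1 h'
  exact isNE_iff_isSaddlePointOn.2 ⟨hp, hq', hs.swap_right hq hp' hs'⟩

lemma forall_payoff_le_iff {v : ℝ} :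
    (∀ x ∈ Icc (0 : ℝ) 1, payoff u11 u12 u21 u22 x q ≤ v) ↔
      payoff u11 u12 u21 u22 0 q ≤ v ∧ payoff u11 u12 u21 u22 1 q ≤ v := by
  refine ⟨fun h ↦ ⟨h 0 (by simp), h 1 (by simp)⟩, ?_⟩
  rintro ⟨h₀, h₁⟩ x ⟨hx₀, hx₁⟩
  calc payoff u11 u12 u21 u22 x q
      = (1 - x) * payoff u11 u12 u21 u22 0 q + x * payoff u11 u12 u21 u22 1 q := by
        unfold payoff; ring
    _ ≤ (1 - x) * v + x * v := by
        have := sub_nonneg.2 hx₁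
        gcongr
    _ = v := by ring

lemma forall_le_payoff_iff {v : ℝ} :
    (∀ y ∈ Icc (0 : ℝ) 1, v ≤ payoff u11 u12 u21 u22 p y) ↔
      v ≤ payoff u11 u12 u21 u22 p 0 ∧ v ≤ payoff u11 u12 u21 u22 p 1 := by
  simpa only [payoff_swap, neg_le_neg_iff] using
    forall_payoff_le_iff (u11 := -u11) (u12 := -u21) (u21 := -u12) (u22 := -u22) (q := p) (v := -v)

lemma isNE_iff_pure_deviations :
    IsNE u11 u12 u21 u22 p q ↔ p ∈ Icc 0 1 ∧ q ∈ Icc 0 1 ∧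
      (payoff u11 u12 u21 u22 0 q ≤ payoff u11 u12 u21 u22 p q ∧
        payoff u11 u12 u21 u22 1 q ≤ payoff u11 u12 u21 u22 p q) ∧
      (payoff u11 u12 u21 u22 p q ≤ payoff u11 u12 u21 u22 p 0 ∧
        payoff u11 u12 u21 u22 p q ≤ payoff u11 u12 u21 u22 p 1) := by
  rw [IsNE, forall_payoff_le_iff, forall_le_payoff_iff]

lemma isNE_right_zero_iff :
    IsNE u11 u12 u21 u22 p 0 ↔ p ∈ Icc 0 1 ∧
      (u22 ≤ u12 * p + u22 * (1 - p) ∧ u12 ≤ u12 * p + u22 * (1 - p)) ∧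
      u12 * p + u22 * (1 - p) ≤ u11 * p + u21 * (1 - p) := by
  simp [isNE_iff_pure_deviations, payoff]

lemma isNE_zero_zero_iff : IsNE u11 u12 u21 u22 0 0 ↔ u12 ≤ u22 ∧ u22 ≤ u21 := by
  simp [isNE_right_zero_iff]

lemma IsNE.left_eq_zero_of_lt (h : IsNE u11 u12 u21 u22 p 0) (hlt : u12 < u22) : p = 0 := by
  obtain ⟨⟨hp, -⟩, ⟨hdev, -⟩, -⟩ := isNE_right_zero_iff.1 h
  have hloss : p * (u22 - u12) ≤ 0 := by linarith
  exact hp.antisymm' (nonpos_of_mul_nonpos_left hloss (sub_pos.2 hlt))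

lemma IsNE.right_eq_zero_of_lt (h : IsNE u11 u12 u21 u22 0 q) (hlt : u22 < u21) : q = 0 :=
  (isNE_swap_iff.2 h).left_eq_zero_of_lt (neg_lt_neg hlt)

lemma IsNE.eq_zero_of_lt (h : IsNE u11 u12 u21 u22 p q) (hrow : u12 < u22) (hcol : u22 < u21) :
    p = 0 ∧ q = 0 := by
  have h₀ : IsNE u11 u12 u21 u22 0 0 := isNE_zero_zero_iff.2 ⟨hrow.le, hcol.le⟩
  exact ⟨(h.interchange h₀).left_eq_zero_of_lt hrow, (h₀.interchange h).right_eq_zero_of_lt hcol⟩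

lemma isNE_right_zero_iff_of_tie :
    IsNE u11 u22 u21 u22 p 0 ↔ p ∈ Icc 0 1 ∧ u22 ≤ u11 * p + u21 * (1 - p) := by
  have hconst : u22 * p + u22 * (1 - p) = u22 := by ring
  simp only [isNE_right_zero_iff, hconst, le_refl, true_and]

lemma exists_isNE_right_zero_of_tie (h : u22 < u21) : ∃ p ≠ 0, IsNE u11 u22 u21 u22 p 0 := by
  have hcont : ContinuousAt (fun x ↦ u11 * x + u21 * (1 - x)) 0 := by fun_prop
  have hslack : ∀ᶠ x in 𝓝[>] 0, u22 < u11 * x + u21 * (1 - x) :=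
    (hcont.eventually_const_lt (by simpa using h)).filter_mono nhdsWithin_le_nhds
  obtain ⟨x, hx, hx₀, hx₁⟩ := (hslack.and (Ioc_mem_nhdsGT one_pos)).exists
  exact ⟨x, hx₀.ne', isNE_right_zero_iff_of_tie.2 ⟨⟨hx₀.le, hx₁⟩, hx.le⟩⟩

lemma exists_isNE_left_zero_of_tie (h : u12 < u22) : ∃ q ≠ 0, IsNE u11 u12 u22 u22 0 q := by
  obtain ⟨q, hq, hNE⟩ := exists_isNE_right_zero_of_tie (u11 := -u11) (neg_lt_neg h)
  exact ⟨q, hq, isNE_swap_iff.1 hNE⟩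

lemma isNE_one_zero_iff_of_tie : IsNE u11 u22 u21 u22 1 0 ↔ u22 ≤ u11 := by
  simp [isNE_right_zero_iff_of_tie]

lemma isNE_zero_one_iff_of_tie : IsNE u11 u12 u22 u22 0 1 ↔ u11 ≤ u22 := by
  rw [← isNE_swap_iff, isNE_one_zero_iff_of_tie, neg_le_neg_iff]

lemma lt_and_lt_of_forall_isNE_eq_zero (h₀ : IsNE u11 u12 u21 u22 0 0)
    (huniq : ∀ p q, IsNE u11 u12 u21 u22 p q → p = 0 ∧ q = 0) : u12 < u22 ∧ u22 < u21 := by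
  obtain ⟨hrow, hcol⟩ := isNE_zero_zero_iff.1 h₀
  rcases hrow.lt_or_eq with hrow | rfl <;> rcases hcol.lt_or_eq with hcol | rfl
  · exact ⟨hrow, hcol⟩
  · obtain ⟨q, hq, hNE⟩ := exists_isNE_left_zero_of_tie (u11 := u11) hrow
    exact absurd (huniq 0 q hNE).2 hq
  · obtain ⟨p, hp, hNE⟩ := exists_isNE_right_zero_of_tie (u11 := u11) hcol
    exact absurd (huniq p 0 hNE).1 hp
  · rcases le_total u12 u11 with hle | hle
    · exact absurd (huniq 1 0 (isNE_one_zero_iff_of_tie.2 hle)).1 one_ne_zero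
    · exact absurd (huniq 0 1 (isNE_zero_one_iff_of_tie.2 hle)).2 one_ne_zero

end

theorem stmt12_general (u11 u12 u21 u22 : ℝ) :
    {pq : ℝ × ℝ | IsNE u11 u12 u21 u22 pq.1 pq.2} = {(0, 0)} ↔ u21 > u22 ∧ u22 > u12 := by
  simp only [eq_singleton_iff_unique_mem, mem_ofPred_eq, Prod.forall, Prod.mk.injEq]
  refine ⟨fun ⟨h₀, huniq⟩ ↦ (lt_and_lt_of_forall_isNE_eq_zero h₀ huniq).symm, ?_⟩
  rintro ⟨hcol, hrow⟩
  exact ⟨isNE_zero_zero_iff.2 ⟨hrow.le, hcol.le⟩, fun p q h ↦ h.eq_zero_of_lt hrow hcol⟩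

theorem stmt12 (u11 u12 u21 u22 p q : ℝ)
    (hS : {pq : ℝ × ℝ | IsNE u11 u12 u21 u22 pq.1 pq.2} = {(p, q)}) :
    ((p, q) = ((0 : ℝ), (0 : ℝ)) ↔ (u21 > u22 ∧ u22 > u12)) ∧
    ((u21 > u22 ∧ u22 > u12) → payoff u11 u12 u21 u22 p q = u22) := by
  rw [← stmt12_general u11, hS, singleton_eq_singleton_iff, Prod.mk.injEq]
  exact ⟨Iff.rfl, by rintro ⟨rfl, rfl⟩; simp [payoff]⟩
end

section
/- Consider a 2×2 zero-sum game with payoff matrix entries u11, u12, u21, u22. If (u11 − u12)·(u22 − u21) ≤ 0 or (u11 − u21)·(u22 − u12) ≤ 0, then every Nash equilibrium (p*, q*) of the game satisfies u(p*, q*) = min{max{u11, u21}, max{u12, u22}} = max{min{u11, u12}, min{u21, u22}}. -/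
/-! Playing a pure action against an equilibrium strategy shows that the value lies between the
pure maximin and the pure minimax. The sign condition says that one of the players has a weakly
dominant action, which forces the pure minimax to be at most the pure maximin. -/

section Dominance

variable {α : Type*} [Lattice α] {a b c d : α}

theorem inf_sup_le_sup_inf_of_columns_comparable (h : b ≤ a ∧ d ≤ c ∨ a ≤ b ∧ c ≤ d) :
    (a ⊔ c) ⊓ (b ⊔ d) ≤ (a ⊓ b) ⊔ (c ⊓ d) := by
  rcases h with ⟨hba, hdc⟩ | ⟨hab, hcd⟩
  · exact inf_le_right.trans (sup_le_sup (le_inf hba le_rfl) (le_inf hdc le_rfl))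
  · exact inf_le_left.trans (sup_le_sup (le_inf le_rfl hab) (le_inf le_rfl hcd))

theorem inf_sup_le_sup_inf_of_rows_comparable (h : c ≤ a ∧ d ≤ b ∨ a ≤ c ∧ b ≤ d) :
    (a ⊔ c) ⊓ (b ⊔ d) ≤ (a ⊓ b) ⊔ (c ⊓ d) := by
  rcases h with ⟨hca, hdb⟩ | ⟨hac, hbd⟩
  · exact (inf_le_inf (sup_le le_rfl hca) (sup_le le_rfl hdb)).trans le_sup_left
  · exact (inf_le_inf (sup_le hac le_rfl) (sup_le hbd le_rfl)).trans le_sup_right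

end Dominance

theorem sub_mul_sub_nonpos_iff_comparable {R : Type*} [Ring R] [LinearOrder R]
    [IsStrictOrderedRing R] {a b c d : R} :
    (a - b) * (d - c) ≤ 0 ↔ b ≤ a ∧ d ≤ c ∨ a ≤ b ∧ c ≤ d := by
  simp only [mul_nonpos_iff, sub_nonneg, sub_nonpos]

section Equilibrium

variable {u11 u12 u21 u22 p q : ℝ}

theorem payoff_one_left : payoff u11 u12 u21 u22 1 q = q • u11 + (1 - q) • u12 := by
  simp only [payoff, smul_eq_mul]
  ring

theorem payoff_zero_left : payoff u11 u12 u21 u22 0 q = q • u21 + (1 - q) • u22 := by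
  simp only [payoff, smul_eq_mul]
  ring

theorem payoff_one_right : payoff u11 u12 u21 u22 p 1 = p • u11 + (1 - p) • u21 := by
  simp only [payoff, smul_eq_mul]
  ring

theorem payoff_zero_right : payoff u11 u12 u21 u22 p 0 = p • u12 + (1 - p) • u22 := by
  simp only [payoff, smul_eq_mul]
  ring

theorem IsNE.max_min_le_payoff (h : IsNE u11 u12 u21 u22 p q) :
    max (min u11 u12) (min u21 u22) ≤ payoff u11 u12 u21 u22 p q := by
  obtain ⟨-, ⟨hq0, hq1⟩, hp_best, -⟩ := h
  have min_le_combo (x y : ℝ) : min x y ≤ q • x + (1 - q) • y :=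
    Convex.min_le_combo x y hq0 (sub_nonneg.2 hq1) (add_sub_cancel q 1)
  refine max_le ?_ ?_
  · calc min u11 u12 ≤ q • u11 + (1 - q) • u12 := min_le_combo u11 u12
      _ = payoff u11 u12 u21 u22 1 q := payoff_one_left.symm
      _ ≤ payoff u11 u12 u21 u22 p q := hp_best 1 unitInterval.one_mem
  · calc min u21 u22 ≤ q • u21 + (1 - q) • u22 := min_le_combo u21 u22
      _ = payoff u11 u12 u21 u22 0 q := payoff_zero_left.symm
      _ ≤ payoff u11 u12 u21 u22 p q := hp_best 0 unitInterval.zero_mem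

theorem IsNE.payoff_le_min_max (h : IsNE u11 u12 u21 u22 p q) :
    payoff u11 u12 u21 u22 p q ≤ min (max u11 u21) (max u12 u22) := by
  obtain ⟨⟨hp0, hp1⟩, -, -, hq_best⟩ := h
  have combo_le_max (x y : ℝ) : p • x + (1 - p) • y ≤ max x y :=
    Convex.combo_le_max x y hp0 (sub_nonneg.2 hp1) (add_sub_cancel p 1)
  refine le_min ?_ ?_
  · calc payoff u11 u12 u21 u22 p q ≤ payoff u11 u12 u21 u22 p 1 :=
          hq_best 1 unitInterval.one_mem
      _ = p • u11 + (1 - p) • u21 := payoff_one_right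
      _ ≤ max u11 u21 := combo_le_max u11 u21
  · calc payoff u11 u12 u21 u22 p q ≤ payoff u11 u12 u21 u22 p 0 :=
          hq_best 0 unitInterval.zero_mem
      _ = p • u12 + (1 - p) • u22 := payoff_zero_right
      _ ≤ max u12 u22 := combo_le_max u12 u22

end Equilibrium

theorem stmt16 (u11 u12 u21 u22 : ℝ)
    (h : (u11 - u12) * (u22 - u21) ≤ 0 ∨ (u11 - u21) * (u22 - u12) ≤ 0) :
    ∀ p q : ℝ, IsNE u11 u12 u21 u22 p q →
      payoff u11 u12 u21 u22 p q = min (max u11 u21) (max u12 u22) ∧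
      payoff u11 u12 u21 u22 p q = max (min u11 u12) (min u21 u22) := by
  intro p q hNE
  have minimax_le_maximin :
      min (max u11 u21) (max u12 u22) ≤ max (min u11 u12) (min u21 u22) := by
    rcases h with h | h
    · exact inf_sup_le_sup_inf_of_columns_comparable (sub_mul_sub_nonpos_iff_comparable.1 h)
    · exact inf_sup_le_sup_inf_of_rows_comparable (sub_mul_sub_nonpos_iff_comparable.1 h)
  have maximin_le := hNE.max_min_le_payoff
  have le_minimax := hNE.payoff_le_min_max
  exact ⟨le_minimax.antisymm (minimax_le_maximin.trans maximin_le),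
    (le_minimax.trans minimax_le_maximin).antisymm maximin_le⟩
end
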